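/- Let B be a finite linear combination of functions of the form A·h_{I×J} with A a d×d matrix and I×J a dyadic rectangle, and let f be a finite linear combination of functions of the form v·h_{K×L} with v ∈ ℂ^d. Then the iterated commutator satisfies [[M_B,Ш₁],Ш₂] f = Σ_{I,J,K,L∈𝒟} B̂(I×J) f̂(K×L) ([M_{h_I},Ш](h_K)) ⊗ ([M_{h_J},Ш](h_L)), and every summand with I ⊄ K (i.e. not I ⊆ K) or J ⊄ L vanishes, so the sum may be restricted to I ⊆ K and J ⊆ L. -/

import Mathlib

/-!
A function that is integrable and constant on the dyadic intervals of some generation has an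
absolutely convergent shift series at every point: fine generations contribute nothing, and
generation `j` contributes `O(2^j)`. Such functions contain the Haar functions and form an algebra,
and `Ш` is linear on them. This covers `Ш(h_I h_I)`, where all coarse generations contribute.

On a finite sum of tensors `Ш₁` and `Ш₂` act on one factor each, so the iterated commutator factors:
`(a₁ - b₁)(a₂ - b₂) = a₁a₂ - b₁a₂ - a₁b₂ + b₁b₂` with `a = g · Шu` and `b = Ш(gu)`.
The identity therefore holds at every point, the coefficients being read off by orthonormality.

Orthogonality and the vanishing summands have the same source: if `I ⊄ K`, then `h_I` is constant
on `K`, where both `h_K` and `Ш h_K` are supported.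
-/

open MeasureTheory Filter Set Matrix ENNReal Topology ComplexOrder

noncomputable section

/-- The dyadic interval `[k·2^{-j}, (k+1)·2^{-j})`. -/
def dyadicI (j k : ℤ) : Set ℝ :=
  Set.Ico ((k : ℝ) * (2 : ℝ) ^ (-j)) (((k : ℝ) + 1) * (2 : ℝ) ^ (-j))

/-- The dyadic rectangle `I × J` indexed by `q = ((j,k),(j',k'))`. -/
def dyadicRect (q : (ℤ × ℤ) × (ℤ × ℤ)) : Set (ℝ × ℝ) :=
  (dyadicI q.1.1 q.1.2) ×ˢ (dyadicI q.2.1 q.2.2)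

/-- The Haar function `h_I = |I|^{-1/2} (1_{I₋} - 1_{I₊})` of the dyadic interval indexed
by `(j,k)`; its left and right halves are the dyadic intervals `(j+1, 2k)` and `(j+1, 2k+1)`. -/
def haar (j k : ℤ) (x : ℝ) : ℝ :=
  Real.sqrt ((2 : ℝ) ^ j) *
    ((dyadicI (j + 1) (2 * k)).indicator (fun _ => (1 : ℝ)) x -
      (dyadicI (j + 1) (2 * k + 1)).indicator (fun _ => (1 : ℝ)) x)

/-- The non-cancellative Haar function `h_I¹ = |I|^{-1/2} 1_I`. -/
def haarOne (j k : ℤ) (x : ℝ) : ℝ :=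
  Real.sqrt ((2 : ℝ) ^ j) * (dyadicI j k).indicator (fun _ => (1 : ℝ)) x

/-- The two-parameter Haar function `h_{I×J} = h_I ⊗ h_J`. -/
def haar2 (q : (ℤ × ℤ) × (ℤ × ℤ)) (p : ℝ × ℝ) : ℝ :=
  haar q.1.1 q.1.2 p.1 * haar q.2.1 q.2.2 p.2

/-- The dyadic parent of the dyadic interval indexed by `(j,k)`. -/
def dyadicParent (q : ℤ × ℤ) : ℤ × ℤ := (q.1 - 1, Int.ediv q.2 2)

/-- Matrix-valued Haar coefficient `B̂(R) = ∫ B h_R` (entrywise). -/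
def hatM (d : ℕ) (B : ℝ × ℝ → Matrix (Fin d) (Fin d) ℂ) (q : (ℤ × ℤ) × (ℤ × ℤ)) :
    Matrix (Fin d) (Fin d) ℂ :=
  Matrix.of fun i l => ∫ p : ℝ × ℝ, B p i l * (haar2 q p : ℂ)

/-- Vector-valued Haar coefficient `f̂(R) = ⟨f, h_R⟩ ∈ ℂ^d`. -/
def hatV (d : ℕ) (f : ℝ × ℝ → Fin d → ℂ) (q : (ℤ × ℤ) × (ℤ × ℤ)) (i : Fin d) : ℂ :=
  ∫ p : ℝ × ℝ, f p i * (haar2 q p : ℂ)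

/-- Scalar Haar coefficient `b̂(R) = ∫ b h_R`. -/
def hatS (b : ℝ × ℝ → ℂ) (q : (ℤ × ℤ) × (ℤ × ℤ)) : ℂ :=
  ∫ p : ℝ × ℝ, b p * (haar2 q p : ℂ)

/-- Mixed wavelet coefficient `⟨f, g₁ ⊗ g₂⟩ ∈ ℂ^d`. -/
def coefMix (d : ℕ) (f : ℝ × ℝ → Fin d → ℂ) (g₁ g₂ : ℝ → ℝ) (i : Fin d) : ℂ :=
  ∫ p : ℝ × ℝ, f p i * ((g₁ p.1 * g₂ p.2 : ℝ) : ℂ)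

/-- The positive-semidefinite (Loewner) order on `d × d` complex matrices. -/
def matLE {d : ℕ} (A B : Matrix (Fin d) (Fin d) ℂ) : Prop := (B - A).PosSemidef

/-- `B` satisfies the two dyadic product BMO inequalities with constant `C`:
for every open set `U ⊆ ℝ²` of finite nonzero measure,
`(1/|U|) Σ_{R ⊆ U} B̂(R)B̂(R)* ≤ C² I_d` and `(1/|U|) Σ_{R ⊆ U} B̂(R)*B̂(R) ≤ C² I_d`. -/
def BMOCond (d : ℕ) (B : ℝ × ℝ → Matrix (Fin d) (Fin d) ℂ) (C : ℝ) : Prop :=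
  ∀ U : Set (ℝ × ℝ), IsOpen U → volume U ≠ 0 → volume U ≠ ⊤ →
    matLE (∑' q : {q : (ℤ × ℤ) × (ℤ × ℤ) // dyadicRect q ⊆ U},
        ((volume U).toReal)⁻¹ • (hatM d B q.1 * (hatM d B q.1)ᴴ))
      ((C ^ 2) • (1 : Matrix (Fin d) (Fin d) ℂ)) ∧
    matLE (∑' q : {q : (ℤ × ℤ) × (ℤ × ℤ) // dyadicRect q ⊆ U},
        ((volume U).toReal)⁻¹ • ((hatM d B q.1)ᴴ * hatM d B q.1))
      ((C ^ 2) • (1 : Matrix (Fin d) (Fin d) ℂ))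

/-- The dyadic product BMO norm: the least admissible constant. -/
def bmoNorm (d : ℕ) (B : ℝ × ℝ → Matrix (Fin d) (Fin d) ℂ) : ℝ :=
  sInf {C : ℝ | 0 ≤ C ∧ BMOCond d B C}

/-- The `L²(ℝ²; ℂ^d)` norm (with the Euclidean norm on `ℂ^d`). -/
def L2V (d : ℕ) (f : ℝ × ℝ → Fin d → ℂ) : ℝ≥0∞ :=
  eLpNorm (fun p => (WithLp.equiv 2 (Fin d → ℂ)).symm (f p)) 2 volume

/-- Hilbert transform in the first variable, as an a.e. principal value. -/
def H1s (f : ℝ × ℝ → ℂ) (p : ℝ × ℝ) : ℂ :=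
  limUnder (𝓝[>] (0 : ℝ)) fun ε : ℝ =>
    (Real.pi : ℂ)⁻¹ * ∫ z in {z : ℝ | ε < |p.1 - z|}, f (z, p.2) / ((p.1 - z : ℝ) : ℂ)

/-- Hilbert transform in the second variable. -/
def H2s (f : ℝ × ℝ → ℂ) (p : ℝ × ℝ) : ℂ :=
  limUnder (𝓝[>] (0 : ℝ)) fun ε : ℝ =>
    (Real.pi : ℂ)⁻¹ * ∫ z in {z : ℝ | ε < |p.2 - z|}, f (p.1, z) / ((p.2 - z : ℝ) : ℂ)

/-- Componentwise Hilbert transform in the first variable. -/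
def H1v (d : ℕ) (f : ℝ × ℝ → Fin d → ℂ) (p : ℝ × ℝ) (i : Fin d) : ℂ :=
  H1s (fun q => f q i) p

/-- Componentwise Hilbert transform in the second variable. -/
def H2v (d : ℕ) (f : ℝ × ℝ → Fin d → ℂ) (p : ℝ × ℝ) (i : Fin d) : ℂ :=
  H2s (fun q => f q i) p

/-- The iterated commutator `[[M_B, H₁], H₂] f = B H₁H₂ f − H₁(B H₂ f) − H₂(B H₁ f) + H₂H₁(Bf)`. -/
def commH (d : ℕ) (B : ℝ × ℝ → Matrix (Fin d) (Fin d) ℂ) (f : ℝ × ℝ → Fin d → ℂ) :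
    ℝ × ℝ → Fin d → ℂ := fun p =>
  (B p).mulVec (H1v d (H2v d f) p) - H1v d (fun q => (B q).mulVec (H2v d f q)) p
    - H2v d (fun q => (B q).mulVec (H1v d f q)) p
    + H2v d (H1v d (fun q => (B q).mulVec (f q))) p

/-- The scalar iterated commutator `[[M_b, H₁], H₂] f`. -/
def commHs (b f : ℝ × ℝ → ℂ) : ℝ × ℝ → ℂ := fun p =>
  b p * H1s (H2s f) p - H1s (fun q => b q * H2s f q) p - H2s (fun q => b q * H1s f q) p
    + H2s (H1s (fun q => b q * f q)) p

/-- The dyadic-shift image of the Haar function: `Ш(h_I) = (h_{I₋} - h_{I₊})/√2`. -/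
def shHaar (j k : ℤ) (x : ℝ) : ℝ :=
  (haar (j + 1) (2 * k) x - haar (j + 1) (2 * k + 1) x) / Real.sqrt 2

/-- The dyadic shift `Ш f = Σ_{I} ⟨f, h_I⟩ (h_{I₋} - h_{I₊})/√2`, realized pointwise as the
limit of its scale-truncated partial sums. -/
def ShS (f : ℝ → ℂ) (x : ℝ) : ℂ :=
  limUnder atTop fun N : ℕ =>
    ∑ j ∈ Finset.Icc (-(N : ℤ)) (N : ℤ),
      ∑' k : ℤ, (∫ t : ℝ, f t * (haar j k t : ℂ)) * (shHaar j k x : ℂ)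

/-- The dyadic shift in the first variable of a `ℂ^d`-valued function on `ℝ²`. -/
def Sh1 (d : ℕ) (f : ℝ × ℝ → Fin d → ℂ) (p : ℝ × ℝ) (i : Fin d) : ℂ :=
  ShS (fun t => f (t, p.2) i) p.1

/-- The dyadic shift in the second variable of a `ℂ^d`-valued function on `ℝ²`. -/
def Sh2 (d : ℕ) (f : ℝ × ℝ → Fin d → ℂ) (p : ℝ × ℝ) (i : Fin d) : ℂ :=
  ShS (fun t => f (p.1, t) i) p.2

/-- The iterated commutator `[[M_B, Ш₁], Ш₂] f`. -/
def commSh (d : ℕ) (B : ℝ × ℝ → Matrix (Fin d) (Fin d) ℂ) (f : ℝ × ℝ → Fin d → ℂ) :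
    ℝ × ℝ → Fin d → ℂ := fun p =>
  (B p).mulVec (Sh1 d (Sh2 d f) p) - Sh1 d (fun q => (B q).mulVec (Sh2 d f q)) p
    - Sh2 d (fun q => (B q).mulVec (Sh1 d f q)) p
    + Sh2 d (Sh1 d (fun q => (B q).mulVec (f q))) p

/-- One-parameter commutator with the dyadic shift: `[M_g, Ш] u = g·Шu − Ш(gu)`. -/
def commShS (g u : ℝ → ℂ) : ℝ → ℂ := fun x => g x * ShS u x - ShS (fun t => g t * u t) x


/-- Paraproduct `P¹_B f = Σ_{I,J} ε_J B̂(I×J̃) ⟨f, h_I ⊗ h_J⟩ h_I¹ ⊗ h_J |I|^{-1/2}|J̃|^{-1/2}`. -/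
def P1 (d : ℕ) (B : ℝ × ℝ → Matrix (Fin d) (Fin d) ℂ) (ε : ℤ × ℤ → ℝ)
    (f : ℝ × ℝ → Fin d → ℂ) (p : ℝ × ℝ) : Fin d → ℂ :=
  ∑' q : (ℤ × ℤ) × (ℤ × ℤ),
    ((ε q.2 * (haarOne q.1.1 q.1.2 p.1 * haar q.2.1 q.2.2 p.2) *
        (Real.sqrt ((2 : ℝ) ^ q.1.1) * Real.sqrt ((2 : ℝ) ^ (dyadicParent q.2).1)) : ℝ) : ℂ) •
      (hatM d B (q.1, dyadicParent q.2)).mulVec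
        (coefMix d f (haar q.1.1 q.1.2) (haar q.2.1 q.2.2))

/-- Paraproduct `P²_B f = Σ_{I,J} ε_J B̂(I×J̃) ⟨f, h_I¹ ⊗ h_{J̃}⟩ h_I ⊗ h_J |I|^{-1/2}|J̃|^{-1/2}`. -/
def P2 (d : ℕ) (B : ℝ × ℝ → Matrix (Fin d) (Fin d) ℂ) (ε : ℤ × ℤ → ℝ)
    (f : ℝ × ℝ → Fin d → ℂ) (p : ℝ × ℝ) : Fin d → ℂ :=
  ∑' q : (ℤ × ℤ) × (ℤ × ℤ),
    ((ε q.2 * (haar q.1.1 q.1.2 p.1 * haar q.2.1 q.2.2 p.2) *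
        (Real.sqrt ((2 : ℝ) ^ q.1.1) * Real.sqrt ((2 : ℝ) ^ (dyadicParent q.2).1)) : ℝ) : ℂ) •
      (hatM d B (q.1, dyadicParent q.2)).mulVec
        (coefMix d f (haarOne q.1.1 q.1.2) (haar (dyadicParent q.2).1 (dyadicParent q.2).2))

/-- Paraproduct `P³_B f = Σ_{I,J} B̂(I×J) ⟨f, h_I¹ ⊗ h_J¹⟩ h_I ⊗ h_J |I|^{-1/2}|J|^{-1/2}`. -/
def P3 (d : ℕ) (B : ℝ × ℝ → Matrix (Fin d) (Fin d) ℂ)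
    (f : ℝ × ℝ → Fin d → ℂ) (p : ℝ × ℝ) : Fin d → ℂ :=
  ∑' q : (ℤ × ℤ) × (ℤ × ℤ),
    (((haar q.1.1 q.1.2 p.1 * haar q.2.1 q.2.2 p.2) *
        (Real.sqrt ((2 : ℝ) ^ q.1.1) * Real.sqrt ((2 : ℝ) ^ q.2.1)) : ℝ) : ℂ) •
      (hatM d B q).mulVec (coefMix d f (haarOne q.1.1 q.1.2) (haarOne q.2.1 q.2.2))

/-- Paraproduct `P⁴_B f = Σ_{I,J} B̂(I×J) ⟨f, h_I ⊗ h_J¹⟩ h_I¹ ⊗ h_J |I|^{-1/2}|J|^{-1/2}`. -/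
def P4 (d : ℕ) (B : ℝ × ℝ → Matrix (Fin d) (Fin d) ℂ)
    (f : ℝ × ℝ → Fin d → ℂ) (p : ℝ × ℝ) : Fin d → ℂ :=
  ∑' q : (ℤ × ℤ) × (ℤ × ℤ),
    (((haarOne q.1.1 q.1.2 p.1 * haar q.2.1 q.2.2 p.2) *
        (Real.sqrt ((2 : ℝ) ^ q.1.1) * Real.sqrt ((2 : ℝ) ^ q.2.1)) : ℝ) : ℂ) •
      (hatM d B q).mulVec (coefMix d f (haar q.1.1 q.1.2) (haarOne q.2.1 q.2.2))

/-- Paraproduct `P⁵_B f = Σ_{I,J} B̂(I×J) ⟨f, h_I¹ ⊗ h_J⟩ h_I ⊗ h_J¹ |I|^{-1/2}|J|^{-1/2}`. -/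
def P5 (d : ℕ) (B : ℝ × ℝ → Matrix (Fin d) (Fin d) ℂ)
    (f : ℝ × ℝ → Fin d → ℂ) (p : ℝ × ℝ) : Fin d → ℂ :=
  ∑' q : (ℤ × ℤ) × (ℤ × ℤ),
    (((haar q.1.1 q.1.2 p.1 * haarOne q.2.1 q.2.2 p.2) *
        (Real.sqrt ((2 : ℝ) ^ q.1.1) * Real.sqrt ((2 : ℝ) ^ q.2.1)) : ℝ) : ℂ) •
      (hatM d B q).mulVec (coefMix d f (haarOne q.1.1 q.1.2) (haar q.2.1 q.2.2))

/-- The matrix-valued bilinear paraproduct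
`Π₁(f,g) = Σ_{I,J} ⟨g, h_I ⊗ h_J⟩ ⟨f, h_I¹ ⊗ h_J¹⟩* h_I ⊗ h_J |I|^{-1/2}|J|^{-1/2}`. -/
def Pi1 (d : ℕ) (f g : ℝ × ℝ → Fin d → ℂ) (p : ℝ × ℝ) : Matrix (Fin d) (Fin d) ℂ :=
  ∑' q : (ℤ × ℤ) × (ℤ × ℤ),
    (((haar q.1.1 q.1.2 p.1 * haar q.2.1 q.2.2 p.2) *
        (Real.sqrt ((2 : ℝ) ^ q.1.1) * Real.sqrt ((2 : ℝ) ^ q.2.1)) : ℝ) : ℂ) •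
      Matrix.of (fun i l =>
        coefMix d g (haar q.1.1 q.1.2) (haar q.2.1 q.2.2) i *
          (starRingEnd ℂ) (coefMix d f (haarOne q.1.1 q.1.2) (haarOne q.2.1 q.2.2) l))

/-- The matrix-valued bilinear paraproduct
`Π₂(f,g) = Σ_{I,J} ⟨g, h_I¹ ⊗ h_J⟩ ⟨f, h_I ⊗ h_J¹⟩* h_I ⊗ h_J |I|^{-1/2}|J|^{-1/2}`. -/
def Pi2 (d : ℕ) (f g : ℝ × ℝ → Fin d → ℂ) (p : ℝ × ℝ) : Matrix (Fin d) (Fin d) ℂ :=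
  ∑' q : (ℤ × ℤ) × (ℤ × ℤ),
    (((haar q.1.1 q.1.2 p.1 * haar q.2.1 q.2.2 p.2) *
        (Real.sqrt ((2 : ℝ) ^ q.1.1) * Real.sqrt ((2 : ℝ) ^ q.2.1)) : ℝ) : ℂ) •
      Matrix.of (fun i l =>
        coefMix d g (haarOne q.1.1 q.1.2) (haar q.2.1 q.2.2) i *
          (starRingEnd ℂ) (coefMix d f (haar q.1.1 q.1.2) (haarOne q.2.1 q.2.2) l))

/-- The squared Hilbert–Schmidt (Frobenius) norm of a matrix. -/
def hsSq {d : ℕ} (A : Matrix (Fin d) (Fin d) ℂ) : ℝ := ∑ i, ∑ l, ‖A i l‖ ^ 2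

/-- The dyadic square function of a matrix-valued function on `ℝ²`:
`S(F)(x,y) = (Σ_R ‖F̂(R)‖_{HS}² 1_R(x,y)/|R|)^{1/2}`. -/
def sqFnM (d : ℕ) (F : ℝ × ℝ → Matrix (Fin d) (Fin d) ℂ) (p : ℝ × ℝ) : ℝ :=
  Real.sqrt (∑' q : (ℤ × ℤ) × (ℤ × ℤ),
    hsSq (hatM d F q) * (dyadicRect q).indicator (fun _ => (1 : ℝ)) p * (2 : ℝ) ^ (q.1.1 + q.2.1))

/-- The dyadic square function of a `ℂ^d`-valued function on `ℝ²`. -/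
def sqFnV (d : ℕ) (g : ℝ × ℝ → Fin d → ℂ) (p : ℝ × ℝ) : ℝ :=
  Real.sqrt (∑' q : (ℤ × ℤ) × (ℤ × ℤ),
    (∑ i, ‖hatV d g q i‖ ^ 2) * (dyadicRect q).indicator (fun _ => (1 : ℝ)) p *
      (2 : ℝ) ^ (q.1.1 + q.2.1))

/-- The pointwise Euclidean norm `‖f(p)‖_{ℂ^d}`. -/
def vnorm (d : ℕ) (f : ℝ × ℝ → Fin d → ℂ) (p : ℝ × ℝ) : ℝ := Real.sqrt (∑ i, ‖f p i‖ ^ 2)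

/-- The strong (dyadic-rectangle) maximal function. -/
def strongMax (u : ℝ × ℝ → ℝ) (p : ℝ × ℝ) : ℝ≥0∞ :=
  ⨆ (q : (ℤ × ℤ) × (ℤ × ℤ)) (_ : p ∈ dyadicRect q),
    (volume (dyadicRect q))⁻¹ * ∫⁻ x in dyadicRect q, ENNReal.ofReal |u x|

/-- The one-dimensional Hardy–Littlewood maximal function. -/
def M1D (u : ℝ → ℝ) (y : ℝ) : ℝ≥0∞ :=
  ⨆ (a : ℝ) (b : ℝ) (_ : y ∈ Set.Ioo a b),
    (volume (Set.Ioo a b))⁻¹ * ∫⁻ t in Set.Ioo a b, ENNReal.ofReal |u t|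

/-- Average of `f` over the dyadic rectangle indexed by `q`. -/
def rectAvg (f : ℝ × ℝ → ℝ) (q : (ℤ × ℤ) × (ℤ × ℤ)) : ℝ :=
  ((volume (dyadicRect q)).toReal)⁻¹ * ∫ p in dyadicRect q, f p

/-- The scalar dyadic product BMO condition with constant `C`. -/
def scalarBMOCond (b : ℝ × ℝ → ℂ) (C : ℝ) : Prop :=
  ∀ U : Set (ℝ × ℝ), IsOpen U → volume U ≠ 0 → volume U ≠ ⊤ →
    ((volume U).toReal)⁻¹ *
      (∑' q : {q : (ℤ × ℤ) × (ℤ × ℤ) // dyadicRect q ⊆ U}, ‖hatS b q.1‖ ^ 2) ≤ C ^ 2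

/-- The scalar dyadic product BMO norm, as a supremum over open sets. -/
def scalarBmoNorm (b : ℝ × ℝ → ℂ) : ℝ :=
  ⨆ U : Set (ℝ × ℝ), ⨆ (_ : IsOpen U ∧ volume U ≠ 0 ∧ volume U ≠ ⊤),
    Real.sqrt (((volume U).toReal)⁻¹ *
      ∑' q : {q : (ℤ × ℤ) × (ℤ × ℤ) // dyadicRect q ⊆ U}, ‖hatS b q.1‖ ^ 2)

/-! ### Dyadic intervals -/

/-- The index `k` of the dyadic interval `(j, k)` of generation `j` that contains `x`. -/
def dyadicIndex (j : ℤ) (x : ℝ) : ℤ := ⌊x * (2 : ℝ) ^ j⌋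

lemma mem_dyadicI {j k : ℤ} {x : ℝ} : x ∈ dyadicI j k ↔ dyadicIndex j x = k := by
  have h2 : (0 : ℝ) < 2 ^ j := by positivity
  rw [dyadicIndex, Int.floor_eq_iff, dyadicI, Set.mem_Ico, _root_.zpow_neg, ← div_eq_mul_inv,
    ← div_eq_mul_inv, div_le_iff₀ h2, lt_div_iff₀ h2]

lemma dyadicIndex_eq_succ_div_two (j : ℤ) (x : ℝ) :
    dyadicIndex j x = dyadicIndex (j + 1) x / 2 := by
  have h : x * (2 : ℝ) ^ j = x * 2 ^ (j + 1) / (2 : ℕ) := by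
    rw [zpow_add_one₀ (by norm_num)]
    push_cast
    ring
  rw [dyadicIndex, h, Int.floor_div_natCast, Nat.cast_ofNat, dyadicIndex]

lemma dyadicIndex_factorsThrough {i j : ℤ} (hij : i ≤ j) :
    (dyadicIndex i).FactorsThrough (dyadicIndex j) := by
  induction j, hij using Int.leInduction with
  | base => exact Function.FactorsThrough.rfl
  | succ j _ ih =>
    intro x y hxy
    apply ih
    rw [dyadicIndex_eq_succ_div_two, hxy, ← dyadicIndex_eq_succ_div_two]

lemma dyadicI_subset_dyadicI {i j k l : ℤ} {x : ℝ} (hij : i ≤ j) (hj : x ∈ dyadicI j k)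
    (hi : x ∈ dyadicI i l) : dyadicI j k ⊆ dyadicI i l := by
  intro y hy
  rw [mem_dyadicI] at *
  exact (dyadicIndex_factorsThrough hij (hy.trans hj.symm)).trans hi

lemma measurableSet_dyadicI (j k : ℤ) : MeasurableSet (dyadicI j k) := measurableSet_Ico

lemma volume_dyadicI (j k : ℤ) : volume (dyadicI j k) = ENNReal.ofReal ((2 : ℝ) ^ (-j)) := by
  rw [dyadicI, Real.volume_Ico]
  congr 1
  ring

lemma volume_real_dyadicI (j k : ℤ) : volume.real (dyadicI j k) = (2 : ℝ) ^ (-j) := by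
  rw [measureReal_def, volume_dyadicI, ENNReal.toReal_ofReal (by positivity)]

lemma dyadicI_injective : Function.Injective fun I : ℤ × ℤ => dyadicI I.1 I.2 := by
  rintro ⟨j, k⟩ ⟨j', k'⟩ (h : dyadicI j k = dyadicI j' k')
  obtain rfl : j = j' := by
    have hvol := volume_real_dyadicI j k
    rw [h, volume_real_dyadicI] at hvol
    exact neg_injective (zpow_right_injective₀ (by norm_num) (by norm_num) hvol.symm)
  have hleft : (k : ℝ) * 2 ^ (-j) ∈ dyadicI j k :=
    ⟨le_rfl, mul_lt_mul_of_pos_right (lt_add_one _) (by positivity)⟩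
  exact congrArg (j, ·) ((mem_dyadicI.mp hleft).symm.trans (mem_dyadicI.mp (h ▸ hleft)))

/-! ### Haar functions -/

lemma haar_eq_ite (j k : ℤ) (x : ℝ) :
    haar j k x = Real.sqrt ((2 : ℝ) ^ j) *
      ((if dyadicIndex (j + 1) x = 2 * k then 1 else 0) -
        (if dyadicIndex (j + 1) x = 2 * k + 1 then 1 else 0)) := by
  classical
  simp only [haar, Set.indicator_apply, mem_dyadicI]

lemma haar_eq_zero_of_notMem {j k : ℤ} {x : ℝ} (hx : x ∉ dyadicI j k) : haar j k x = 0 := by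
  have hindex := dyadicIndex_eq_succ_div_two j x
  rw [mem_dyadicI] at hx
  rw [haar_eq_ite, if_neg (by lia), if_neg (by lia), sub_zero, mul_zero]

lemma haar_sq (j k : ℤ) (x : ℝ) :
    haar j k x ^ 2 = (dyadicI j k).indicator (fun _ => (2 : ℝ) ^ j) x := by
  by_cases hx : x ∈ dyadicI j k
  · have hsqrt : Real.sqrt ((2 : ℝ) ^ j) ^ 2 = 2 ^ j := Real.sq_sqrt (by positivity)
    rw [Set.indicator_of_mem hx, haar_eq_ite, mul_pow, hsqrt]
    rw [mem_dyadicI, dyadicIndex_eq_succ_div_two] at hx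
    obtain h | h : dyadicIndex (j + 1) x = 2 * k ∨ dyadicIndex (j + 1) x = 2 * k + 1 := by lia
    all_goals simp [h]
  · rw [Set.indicator_of_notMem hx, haar_eq_zero_of_notMem hx, zero_pow two_ne_zero]

lemma abs_haar_le (j k : ℤ) (x : ℝ) : |haar j k x| ≤ Real.sqrt ((2 : ℝ) ^ j) := by
  refine Real.abs_le_sqrt ?_
  rw [haar_sq]
  exact Set.indicator_apply_le' (fun _ => le_rfl) fun _ => by positivity

lemma haar_factorsThrough {j i : ℤ} (hji : j < i) (k : ℤ) :
    (haar j k).FactorsThrough (dyadicIndex i) := by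
  intro x y hxy
  rw [haar_eq_ite, haar_eq_ite, dyadicIndex_factorsThrough hji hxy]

lemma exists_haar_eq_of_not_subset {j k j' k' : ℤ} (h : ¬ dyadicI j k ⊆ dyadicI j' k') :
    ∃ c, ∀ x ∈ dyadicI j' k', haar j k x = c := by
  rcases lt_or_ge j j' with hlt | hge
  · rcases (dyadicI j' k').eq_empty_or_nonempty with hempty | ⟨y, hy⟩
    · exact ⟨0, by simp [hempty]⟩
    · refine ⟨haar j k y, fun x hx => haar_factorsThrough hlt k ?_⟩
      exact (mem_dyadicI.mp hx).trans (mem_dyadicI.mp hy).symm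
  · exact ⟨0, fun x hx => haar_eq_zero_of_notMem fun hx' => h (dyadicI_subset_dyadicI hge hx' hx)⟩

lemma integrable_indicator_dyadicI (j k : ℤ) (c : ℝ) :
    Integrable ((dyadicI j k).indicator fun _ => c) :=
  (integrable_indicator_iff (measurableSet_dyadicI j k)).mpr
    (integrableOn_const (by rw [volume_dyadicI]; exact ENNReal.ofReal_ne_top))

lemma integral_indicator_dyadicI (j k : ℤ) (c : ℝ) :
    ∫ x, (dyadicI j k).indicator (fun _ => c) x = (2 : ℝ) ^ (-j) * c := by
  rw [integral_indicator_const c (measurableSet_dyadicI j k), volume_real_dyadicI, smul_eq_mul]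

lemma integrable_haar (j k : ℤ) : Integrable (haar j k) :=
  ((integrable_indicator_dyadicI _ _ _).sub (integrable_indicator_dyadicI _ _ _)).const_mul _

lemma integral_haar (j k : ℤ) : ∫ x, haar j k x = 0 := by
  simp only [haar]
  rw [integral_const_mul, integral_sub (integrable_indicator_dyadicI _ _ _)
    (integrable_indicator_dyadicI _ _ _), integral_indicator_dyadicI, integral_indicator_dyadicI,
    sub_self, mul_zero]

/-! ### Haar coefficients -/

/-- The complex-valued Haar function `h_I`, with the dyadic interval `I` given by its index pair. -/
def haarC (I : ℤ × ℤ) (x : ℝ) : ℂ := (haar I.1 I.2 x : ℂ)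

/-- The one-parameter Haar coefficient `⟨f, h_I⟩`. -/
def haarCoeff (f : ℝ → ℂ) (I : ℤ × ℤ) : ℂ := ∫ x, f x * haarC I x

lemma integrable_haarC (I : ℤ × ℤ) : Integrable (haarC I) := (integrable_haar I.1 I.2).ofReal

lemma norm_haarC_le (I : ℤ × ℤ) (x : ℝ) : ‖haarC I x‖ ≤ Real.sqrt ((2 : ℝ) ^ I.1) := by
  rw [haarC, Complex.norm_real]
  exact abs_haar_le I.1 I.2 x

lemma integrable_mul_haarC {f : ℝ → ℂ} (hf : Integrable f) (I : ℤ × ℤ) :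
    Integrable fun x => f x * haarC I x :=
  hf.mul_bdd (integrable_haarC I).aestronglyMeasurable (ae_of_all _ (norm_haarC_le I))

lemma mul_haarC_eq_const_mul {f : ℝ → ℂ} {I : ℤ × ℤ} {c : ℂ}
    (hf : ∀ x ∈ dyadicI I.1 I.2, f x = c) (x : ℝ) : f x * haarC I x = c * haarC I x := by
  by_cases hx : x ∈ dyadicI I.1 I.2
  · rw [hf x hx]
  · rw [haarC, haar_eq_zero_of_notMem hx, Complex.ofReal_zero, mul_zero, mul_zero]

lemma haarCoeff_eq_zero_of_const {f : ℝ → ℂ} {I : ℤ × ℤ} {c : ℂ}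
    (hf : ∀ x ∈ dyadicI I.1 I.2, f x = c) : haarCoeff f I = 0 := by
  rw [haarCoeff, integral_congr_ae (ae_of_all _ (mul_haarC_eq_const_mul hf)), integral_const_mul]
  simp only [haarC]
  rw [integral_complex_ofReal, integral_haar, Complex.ofReal_zero, mul_zero]

lemma haarCoeff_haarC_comm (I K : ℤ × ℤ) : haarCoeff (haarC I) K = haarCoeff (haarC K) I := by
  simp only [haarCoeff, mul_comm]

lemma haarCoeff_haarC_of_not_subset {I K : ℤ × ℤ}
    (h : ¬ dyadicI I.1 I.2 ⊆ dyadicI K.1 K.2) : haarCoeff (haarC I) K = 0 := by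
  obtain ⟨c, hc⟩ := exists_haar_eq_of_not_subset h
  exact haarCoeff_eq_zero_of_const fun x hx => congrArg Complex.ofReal (hc x hx)

lemma haarCoeff_haarC_self (I : ℤ × ℤ) : haarCoeff (haarC I) I = 1 := by
  have hsq : ∀ x, haarC I x * haarC I x =
      ((dyadicI I.1 I.2).indicator (fun _ => (2 : ℝ) ^ I.1) x : ℝ) := fun x => by
    rw [haarC, ← Complex.ofReal_mul, ← sq, haar_sq]
  simp only [haarCoeff, hsq]
  rw [integral_complex_ofReal, integral_indicator_dyadicI, ← zpow_add₀ (by norm_num),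
    neg_add_cancel, zpow_zero, Complex.ofReal_one]

lemma haarCoeff_haarC (I K : ℤ × ℤ) : haarCoeff (haarC I) K = if I = K then 1 else 0 := by
  split_ifs with hIK
  · rw [hIK, haarCoeff_haarC_self]
  · by_cases hsub : dyadicI I.1 I.2 ⊆ dyadicI K.1 K.2
    · rw [haarCoeff_haarC_comm]
      exact haarCoeff_haarC_of_not_subset fun hsub' =>
        hIK (dyadicI_injective (hsub.antisymm hsub'))
    · exact haarCoeff_haarC_of_not_subset hsub

lemma haarCoeff_sum {ι : Type*} {S : Finset ι} {u : ι → ℝ → ℂ} (hu : ∀ a ∈ S, Integrable (u a))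
    (c : ι → ℂ) (I : ℤ × ℤ) :
    haarCoeff (fun x => ∑ a ∈ S, c a * u a x) I = ∑ a ∈ S, c a * haarCoeff (u a) I := by
  simp only [haarCoeff, Finset.sum_mul, mul_assoc]
  rw [integral_finsetSum _ fun a ha => (integrable_mul_haarC (hu a ha) I).const_mul _]
  simp only [integral_const_mul]

lemma norm_haarCoeff_le {f : ℝ → ℂ} (hf : Integrable f) (I : ℤ × ℤ) :
    ‖haarCoeff f I‖ ≤ (∫ x, ‖f x‖) * Real.sqrt ((2 : ℝ) ^ I.1) := by
  rw [haarCoeff, ← integral_mul_const]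
  refine norm_integral_le_of_norm_le (hf.norm.mul_const _) (ae_of_all _ fun x => ?_)
  rw [norm_mul]
  exact mul_le_mul_of_nonneg_left (norm_haarC_le I x) (norm_nonneg _)

/-! ### Dyadic step functions -/

/-- Integrable functions that are constant on the dyadic intervals of some generation. On this
class the series defining `Ш` converges absolutely at every point. -/
structure IsDyadicStep (f : ℝ → ℂ) : Prop where
  integrable : Integrable f
  exists_factorsThrough : ∃ j, f.FactorsThrough (dyadicIndex j)

lemma isDyadicStep_haarC (I : ℤ × ℤ) : IsDyadicStep (haarC I) where
  integrable := integrable_haarC I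
  exists_factorsThrough :=
    ⟨I.1 + 1, (haar_factorsThrough (lt_add_one I.1) I.2).comp_left Complex.ofReal⟩

lemma IsDyadicStep.exists_norm_le {f : ℝ → ℂ} (hf : IsDyadicStep f) : ∃ C, ∀ x, ‖f x‖ ≤ C := by
  obtain ⟨j, hj⟩ := hf.exists_factorsThrough
  refine ⟨2 ^ j * ∫ y, ‖f y‖, fun x => ?_⟩
  have hconst : ∫ y in dyadicI j (dyadicIndex j x), ‖f y‖ = 2 ^ (-j) * ‖f x‖ := by
    rw [setIntegral_congr_fun (g := fun _ => ‖f x‖) (measurableSet_dyadicI _ _)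
      fun y hy => congrArg norm (hj (mem_dyadicI.mp hy)), setIntegral_const, volume_real_dyadicI,
      smul_eq_mul]
  calc ‖f x‖ = 2 ^ j * (2 ^ (-j) * ‖f x‖) := by
        rw [← mul_assoc, ← zpow_add₀ (by norm_num), add_neg_cancel, zpow_zero, one_mul]
    _ ≤ 2 ^ j * ∫ y, ‖f y‖ := by
        rw [← hconst]
        exact mul_le_mul_of_nonneg_left (setIntegral_le_integral hf.integrable.norm
          (ae_of_all _ fun y => norm_nonneg _)) (by positivity)

lemma IsDyadicStep.mul {f g : ℝ → ℂ} (hf : IsDyadicStep f) (hg : IsDyadicStep g) :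
    IsDyadicStep fun x => f x * g x where
  integrable := by
    obtain ⟨C, hC⟩ := hg.exists_norm_le
    exact hf.integrable.mul_bdd hg.integrable.aestronglyMeasurable (ae_of_all _ hC)
  exists_factorsThrough := by
    obtain ⟨i, hi⟩ := hf.exists_factorsThrough
    obtain ⟨j, hj⟩ := hg.exists_factorsThrough
    refine ⟨max i j, fun x y hxy => ?_⟩
    exact congrArg₂ (· * ·) (hi (dyadicIndex_factorsThrough (le_max_left i j) hxy))
      (hj (dyadicIndex_factorsThrough (le_max_right i j) hxy))

/-! ### The dyadic shift on step functions -/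

lemma shHaar_eq_zero_of_notMem {j k : ℤ} {x : ℝ} (hx : x ∉ dyadicI j k) : shHaar j k x = 0 := by
  have hindex := dyadicIndex_eq_succ_div_two j x
  rw [mem_dyadicI] at hx
  have hchild : ∀ l, l / 2 = k → haar (j + 1) l x = 0 := fun l hl =>
    haar_eq_zero_of_notMem (by rw [mem_dyadicI]; lia)
  rw [shHaar, hchild _ (by lia), hchild _ (by lia), sub_zero, zero_div]

lemma abs_shHaar_le (j k : ℤ) (x : ℝ) : |shHaar j k x| ≤ 2 * Real.sqrt ((2 : ℝ) ^ j) := by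
  have hsqrt : Real.sqrt ((2 : ℝ) ^ (j + 1)) = Real.sqrt (2 ^ j) * Real.sqrt 2 := by
    rw [zpow_add_one₀ (by norm_num), Real.sqrt_mul (by positivity)]
  rw [shHaar, abs_div, abs_of_nonneg (Real.sqrt_nonneg 2), div_le_iff₀ (by positivity)]
  calc |haar (j + 1) (2 * k) x - haar (j + 1) (2 * k + 1) x|
      ≤ |haar (j + 1) (2 * k) x| + |haar (j + 1) (2 * k + 1) x| := abs_sub _ _
    _ ≤ Real.sqrt ((2 : ℝ) ^ (j + 1)) + Real.sqrt ((2 : ℝ) ^ (j + 1)) :=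
        add_le_add (abs_haar_le _ _ _) (abs_haar_le _ _ _)
    _ = 2 * Real.sqrt ((2 : ℝ) ^ j) * Real.sqrt 2 := by rw [hsqrt]; ring

/-- The contribution of generation `j` to `Ш f (x)`, which comes from the interval containing `x`
alone. -/
def shTerm (f : ℝ → ℂ) (x : ℝ) (j : ℤ) : ℂ :=
  haarCoeff f (j, dyadicIndex j x) * (shHaar j (dyadicIndex j x) x : ℂ)

lemma tsum_eq_shTerm (f : ℝ → ℂ) (x : ℝ) (j : ℤ) :
    ∑' k : ℤ, (∫ t : ℝ, f t * (haar j k t : ℂ)) * (shHaar j k x : ℂ) = shTerm f x j := by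
  refine tsum_eq_single (dyadicIndex j x) fun k hk => ?_
  rw [shHaar_eq_zero_of_notMem fun hx => hk (mem_dyadicI.mp hx).symm, Complex.ofReal_zero, mul_zero]

lemma ShS_eq_of_hasSum {f : ℝ → ℂ} {x : ℝ} {a : ℂ} (h : HasSum (shTerm f x) a) : ShS f x = a := by
  simp only [ShS, tsum_eq_shTerm]
  exact Tendsto.limUnder_eq (h.comp Finset.tendsto_Icc_neg)

lemma norm_shTerm_le {f : ℝ → ℂ} (hf : Integrable f) (x : ℝ) (j : ℤ) :
    ‖shTerm f x j‖ ≤ 2 * (∫ t, ‖f t‖) * (2 : ℝ) ^ j := by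
  rw [shTerm, norm_mul, Complex.norm_real]
  calc ‖haarCoeff f (j, dyadicIndex j x)‖ * |shHaar j (dyadicIndex j x) x|
      ≤ ((∫ t, ‖f t‖) * Real.sqrt (2 ^ j)) * (2 * Real.sqrt (2 ^ j)) := by
        gcongr
        · exact norm_haarCoeff_le hf _
        · exact abs_shHaar_le _ _ _
    _ = 2 * (∫ t, ‖f t‖) * (Real.sqrt (2 ^ j) * Real.sqrt (2 ^ j)) := by ring
    _ = 2 * (∫ t, ‖f t‖) * 2 ^ j := by rw [Real.mul_self_sqrt (by positivity)]

lemma shTerm_eq_zero_of_factorsThrough {f : ℝ → ℂ} {i j : ℤ}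
    (hf : f.FactorsThrough (dyadicIndex i)) (hij : i ≤ j) (x : ℝ) : shTerm f x j = 0 := by
  have hcoeff : haarCoeff f (j, dyadicIndex j x) = 0 :=
    haarCoeff_eq_zero_of_const (c := f x) fun y hy =>
      hf (dyadicIndex_factorsThrough hij (mem_dyadicI.mp hy))
  rw [shTerm, hcoeff, zero_mul]

lemma summable_int_of_norm_le_zpow {E : Type*} [NormedAddCommGroup E] [CompleteSpace E]
    {g : ℤ → E} {C r : ℝ} {i : ℤ} (hr : 1 < r) (hle : ∀ j, ‖g j‖ ≤ C * r ^ j)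
    (hzero : ∀ j, i ≤ j → g j = 0) : Summable g := by
  refine .of_nat_of_neg ?_ ?_
  · refine summable_of_ne_finset_zero (s := Finset.range i.toNat) fun n hn => hzero n ?_
    rw [Finset.mem_range] at hn
    lia
  · refine .of_norm_bounded ((summable_geometric_of_lt_one (r := r⁻¹) (by positivity)
      (inv_lt_one_of_one_lt₀ hr)).mul_left C) fun n => ?_
    simpa using hle (-n)

lemma IsDyadicStep.summable_shTerm {f : ℝ → ℂ} (hf : IsDyadicStep f) (x : ℝ) :
    Summable (shTerm f x) := by
  obtain ⟨i, hi⟩ := hf.exists_factorsThrough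
  exact summable_int_of_norm_le_zpow one_lt_two (norm_shTerm_le hf.integrable x) fun j hij =>
    shTerm_eq_zero_of_factorsThrough hi hij x

lemma IsDyadicStep.hasSum_shTerm {f : ℝ → ℂ} (hf : IsDyadicStep f) (x : ℝ) :
    HasSum (shTerm f x) (ShS f x) := by
  have h := (hf.summable_shTerm x).hasSum
  rwa [← ShS_eq_of_hasSum h] at h

lemma ShS_sum {ι : Type*} {S : Finset ι} {u : ι → ℝ → ℂ} (hu : ∀ a ∈ S, IsDyadicStep (u a))
    (c : ι → ℂ) (x : ℝ) :
    ShS (fun t => ∑ a ∈ S, c a * u a t) x = ∑ a ∈ S, c a * ShS (u a) x := by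
  refine ShS_eq_of_hasSum ?_
  have hterm : shTerm (fun t => ∑ a ∈ S, c a * u a t) x =
      fun j => ∑ a ∈ S, c a * shTerm (u a) x j := by
    funext j
    simp only [shTerm, haarCoeff_sum fun a ha => (hu a ha).integrable, Finset.sum_mul, mul_assoc]
  rw [hterm]
  exact hasSum_sum fun a ha => ((hu a ha).hasSum_shTerm x).mul_left (c a)

lemma ShS_const_mul {f : ℝ → ℂ} (hf : IsDyadicStep f) (c : ℂ) (x : ℝ) :
    ShS (fun t => c * f t) x = c * ShS f x := by
  simpa using ShS_sum (S := {()}) (u := fun _ => f) (fun _ _ => hf) (fun _ => c) x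

lemma ShS_haarC (I : ℤ × ℤ) (x : ℝ) : ShS (haarC I) x = (shHaar I.1 I.2 x : ℂ) := by
  have hterm : ∀ j, shTerm (haarC I) x j = if j = I.1 then (shHaar I.1 I.2 x : ℂ) else 0 := by
    intro j
    rw [shTerm, haarCoeff_haarC]
    by_cases hI : I = (j, dyadicIndex j x)
    · simp [hI]
    · have hx : j = I.1 → x ∉ dyadicI I.1 I.2 := by
        rintro rfl hx
        exact hI (Prod.ext rfl (mem_dyadicI.mp hx).symm)
      rw [if_neg hI, zero_mul]
      split_ifs with hj
      · rw [shHaar_eq_zero_of_notMem (hx hj), Complex.ofReal_zero]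
      · rfl
  exact ShS_eq_of_hasSum ((hasSum_ite_eq I.1 _).congr_fun hterm)

lemma commShS_haar_eq_zero {j k j' k' : ℤ} (h : ¬ dyadicI j k ⊆ dyadicI j' k') (x : ℝ) :
    commShS (fun t => (haar j k t : ℂ)) (fun t => (haar j' k' t : ℂ)) x = 0 := by
  change commShS (haarC (j, k)) (haarC (j', k')) x = 0
  obtain ⟨c, hc⟩ := exists_haar_eq_of_not_subset h
  have hconst : ∀ t ∈ dyadicI j' k', haarC (j, k) t = c := fun t ht =>
    congrArg Complex.ofReal (hc t ht)
  have hmul : (fun t => haarC (j, k) t * haarC (j', k') t) = fun t => c * haarC (j', k') t :=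
    funext (mul_haarC_eq_const_mul hconst)
  rw [commShS, hmul, ShS_const_mul (isDyadicStep_haarC _), ShS_haarC]
  by_cases hx : x ∈ dyadicI j' k'
  · rw [hconst x hx, sub_self]
  · rw [shHaar_eq_zero_of_notMem hx, Complex.ofReal_zero, mul_zero, mul_zero, sub_zero]

/-! ### Finite sums of tensors -/

/-- The finite sum `Σ_{a ∈ S} (u_a ⊗ w_a) c_a` with coefficients `c_a` in a complex vector space;
both the matrix symbol `B` and the vector function `f` are of this form. -/
def tensorSum {ι E : Type*} [AddCommMonoid E] [Module ℂ E] (S : Finset ι) (u w : ι → ℝ → ℂ)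
    (c : ι → E) (p : ℝ × ℝ) : E :=
  ∑ a ∈ S, (u a p.1 * w a p.2) • c a

section TensorSum

variable {ι κ : Type*} {d : ℕ} {S : Finset ι} {T : Finset κ} {u w : ι → ℝ → ℂ} {u' w' : κ → ℝ → ℂ}

lemma Sh1_tensorSum (hu : ∀ a ∈ S, IsDyadicStep (u a)) (w : ι → ℝ → ℂ) (c : ι → Fin d → ℂ) :
    Sh1 d (tensorSum S u w c) = tensorSum S (fun a => ShS (u a)) w c := by
  funext p i
  have h := ShS_sum hu (fun a => w a p.2 * c a i) p.1
  simpa only [Sh1, tensorSum, Finset.sum_apply, Pi.smul_apply, smul_eq_mul, mul_assoc, mul_comm,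
    mul_left_comm] using h

lemma Sh2_tensorSum (hw : ∀ a ∈ S, IsDyadicStep (w a)) (u : ι → ℝ → ℂ) (c : ι → Fin d → ℂ) :
    Sh2 d (tensorSum S u w c) = tensorSum S u (fun a => ShS (w a)) c := by
  funext p i
  have h := ShS_sum hw (fun a => u a p.1 * c a i) p.2
  simpa only [Sh2, tensorSum, Finset.sum_apply, Pi.smul_apply, smul_eq_mul, mul_assoc, mul_comm,
    mul_left_comm] using h

lemma tensorSum_mulVec_tensorSum {m n : Type*} [Fintype n] (S : Finset ι) (T : Finset κ)
    (u w : ι → ℝ → ℂ) (u' w' : κ → ℝ → ℂ) (A : ι → Matrix m n ℂ) (v : κ → n → ℂ) (p : ℝ × ℝ) :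
    tensorSum S u w A p *ᵥ tensorSum T u' w' v p =
      tensorSum (S ×ˢ T) (fun r x => u r.1 x * u' r.2 x) (fun r y => w r.1 y * w' r.2 y)
        (fun r => A r.1 *ᵥ v r.2) p := by
  rw [tensorSum, tensorSum, tensorSum, Matrix.sum_mulVec, Finset.sum_product]
  simp only [Matrix.mulVec_sum, Matrix.smul_mulVec, Matrix.mulVec_smul, smul_smul]
  refine Finset.sum_congr rfl fun a _ => Finset.sum_congr rfl fun b _ =>
    congrArg (· • (A a *ᵥ v b)) ?_
  ring

lemma commSh_tensorSum (hu : ∀ a ∈ S, IsDyadicStep (u a)) (hw : ∀ a ∈ S, IsDyadicStep (w a))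
    (hu' : ∀ b ∈ T, IsDyadicStep (u' b)) (hw' : ∀ b ∈ T, IsDyadicStep (w' b))
    (A : ι → Matrix (Fin d) (Fin d) ℂ) (v : κ → Fin d → ℂ) :
    commSh d (tensorSum S u w A) (tensorSum T u' w' v) =
      tensorSum (S ×ˢ T) (fun r => commShS (u r.1) (u' r.2)) (fun r => commShS (w r.1) (w' r.2))
        (fun r => A r.1 *ᵥ v r.2) := by
  have huu' : ∀ r ∈ S ×ˢ T, IsDyadicStep fun x => u r.1 x * u' r.2 x := fun r hr =>
    (hu _ (Finset.mem_product.mp hr).1).mul (hu' _ (Finset.mem_product.mp hr).2)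
  have hww' : ∀ r ∈ S ×ˢ T, IsDyadicStep fun y => w r.1 y * w' r.2 y := fun r hr =>
    (hw _ (Finset.mem_product.mp hr).1).mul (hw' _ (Finset.mem_product.mp hr).2)
  funext p
  simp only [commSh, Sh1_tensorSum hu', Sh2_tensorSum hw', tensorSum_mulVec_tensorSum,
    Sh1_tensorSum huu', Sh2_tensorSum hww']
  simp only [tensorSum, ← Finset.sum_sub_distrib, ← Finset.sum_add_distrib, ← sub_smul, ← add_smul]
  refine Finset.sum_congr rfl fun r _ => congrArg (· • (A r.1 *ᵥ v r.2)) ?_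
  simp only [commShS]
  ring

lemma hatS_tensorSum (hu : ∀ a ∈ S, Integrable (u a)) (hw : ∀ a ∈ S, Integrable (w a)) (c : ι → ℂ)
    (R : (ℤ × ℤ) × (ℤ × ℤ)) :
    hatS (tensorSum S u w c) R =
      ∑ a ∈ S, haarCoeff (u a) R.1 * haarCoeff (w a) R.2 * c a := by
  have hsplit : ∀ p : ℝ × ℝ, tensorSum S u w c p * (haar2 R p : ℂ) =
      ∑ a ∈ S, u a p.1 * haarC R.1 p.1 * (w a p.2 * haarC R.2 p.2) * c a := fun p => by
    rw [tensorSum, Finset.sum_mul]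
    refine Finset.sum_congr rfl fun a _ => ?_
    simp only [haar2, haarC, Complex.ofReal_mul, smul_eq_mul]
    ring
  simp only [hatS, hsplit, Measure.volume_eq_prod]
  rw [integral_finsetSum _ fun a ha => ((integrable_mul_haarC (hu a ha) R.1).mul_prod
    (integrable_mul_haarC (hw a ha) R.2)).mul_const (c a)]
  refine Finset.sum_congr rfl fun a _ => ?_
  rw [integral_mul_const,
    integral_prod_mul (fun x => u a x * haarC R.1 x) (fun y => w a y * haarC R.2 y)]
  rfl

end TensorSum

/-! ### Finite Haar sums -/

/-- The finite Haar sum `Σ_{R ∈ s} h_R a_R` with coefficients in a complex vector space. -/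
def haarSum {E : Type*} [AddCommMonoid E] [Module ℂ E] (s : Finset ((ℤ × ℤ) × (ℤ × ℤ)))
    (a : (ℤ × ℤ) × (ℤ × ℤ) → E) (p : ℝ × ℝ) : E :=
  ∑ R ∈ s, (haar2 R p : ℂ) • a R

section HaarSum

variable {d : ℕ} (s t : Finset ((ℤ × ℤ) × (ℤ × ℤ)))
  (A : (ℤ × ℤ) × (ℤ × ℤ) → Matrix (Fin d) (Fin d) ℂ) (v : (ℤ × ℤ) × (ℤ × ℤ) → Fin d → ℂ)

lemma haarSum_eq_tensorSum {E : Type*} [AddCommMonoid E] [Module ℂ E]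
    (a : (ℤ × ℤ) × (ℤ × ℤ) → E) :
    haarSum s a = tensorSum s (fun R => haarC R.1) (fun R => haarC R.2) a := by
  funext p
  simp only [haarSum, tensorSum, haar2, haarC, Complex.ofReal_mul]

lemma hatS_haarSum (a : (ℤ × ℤ) × (ℤ × ℤ) → ℂ) (R : (ℤ × ℤ) × (ℤ × ℤ)) :
    hatS (haarSum s a) R = if R ∈ s then a R else 0 := by
  have horthonormal : ∀ Q : (ℤ × ℤ) × (ℤ × ℤ),
      haarCoeff (haarC Q.1) R.1 * haarCoeff (haarC Q.2) R.2 = if Q = R then 1 else 0 := fun Q => by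
    simp only [haarCoeff_haarC, Prod.ext_iff (x := Q), ite_and, ite_mul, one_mul, zero_mul]
  rw [haarSum_eq_tensorSum, hatS_tensorSum (fun _ _ => integrable_haarC _)
    fun _ _ => integrable_haarC _]
  simp only [horthonormal, ite_mul, one_mul, zero_mul, Finset.sum_ite_eq']

lemma hatM_haarSum (R : (ℤ × ℤ) × (ℤ × ℤ)) :
    hatM d (haarSum s A) R = if R ∈ s then A R else 0 := by
  ext i l
  have hentry : (fun p => haarSum s A p i l) = haarSum s fun Q => A Q i l := by
    funext p
    simp only [haarSum, Matrix.sum_apply, Matrix.smul_apply]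
  have h : hatM d (haarSum s A) R i l = hatS (fun p => haarSum s A p i l) R := rfl
  rw [h, hentry, hatS_haarSum]
  split_ifs <;> rfl

lemma hatV_haarSum (R : (ℤ × ℤ) × (ℤ × ℤ)) :
    hatV d (haarSum t v) R = if R ∈ t then v R else 0 := by
  ext i
  have hentry : (fun p => haarSum t v p i) = haarSum t fun Q => v Q i := by
    funext p
    simp only [haarSum, Finset.sum_apply, Pi.smul_apply]
  have h : hatV d (haarSum t v) R i = hatS (fun p => haarSum t v p i) R := rfl
  rw [h, hentry, hatS_haarSum]
  split_ifs <;> rfl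

lemma commSh_haarSum (p : ℝ × ℝ) :
    commSh d (haarSum s A) (haarSum t v) p =
      ∑' r : ((ℤ × ℤ) × (ℤ × ℤ)) × ((ℤ × ℤ) × (ℤ × ℤ)),
        (commShS (haarC r.1.1) (haarC r.2.1) p.1 * commShS (haarC r.1.2) (haarC r.2.2) p.2) •
          hatM d (haarSum s A) r.1 *ᵥ hatV d (haarSum t v) r.2 := by
  have hcoeff : ∀ r : ((ℤ × ℤ) × (ℤ × ℤ)) × ((ℤ × ℤ) × (ℤ × ℤ)),
      hatM d (haarSum s A) r.1 *ᵥ hatV d (haarSum t v) r.2 =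
        if r ∈ s ×ˢ t then A r.1 *ᵥ v r.2 else 0 := by
    intro r
    rw [hatM_haarSum, hatV_haarSum]
    by_cases hs : r.1 ∈ s <;> by_cases ht : r.2 ∈ t <;> simp [hs, ht]
  simp only [hcoeff]
  rw [tsum_eq_sum (s := s ×ˢ t) fun r hr => by rw [if_neg hr, smul_zero], haarSum_eq_tensorSum,
    haarSum_eq_tensorSum, commSh_tensorSum (fun _ _ => isDyadicStep_haarC _)
      (fun _ _ => isDyadicStep_haarC _) (fun _ _ => isDyadicStep_haarC _)
      fun _ _ => isDyadicStep_haarC _]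
  exact Finset.sum_congr rfl fun r hr => by rw [if_pos hr]

end HaarSum

/-- For `B` a finite linear combination of functions `A · h_{I×J}` (`A` a `d × d` matrix) and
`f` a finite linear combination of functions `v · h_{K×L}` (`v ∈ ℂ^d`), the iterated
commutator expands as
`[[M_B, Ш₁], Ш₂] f = Σ_{I,J,K,L} B̂(I×J) f̂(K×L) ([M_{h_I},Ш] h_K) ⊗ ([M_{h_J},Ш] h_L)`,
and every summand with `¬ I ⊆ K` or `¬ J ⊆ L` vanishes identically. -/
theorem commutator_haar_expansion (d : ℕ)
    (s t : Finset ((ℤ × ℤ) × (ℤ × ℤ)))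
    (A : ((ℤ × ℤ) × (ℤ × ℤ)) → Matrix (Fin d) (Fin d) ℂ)
    (v : ((ℤ × ℤ) × (ℤ × ℤ)) → Fin d → ℂ)
    (B : ℝ × ℝ → Matrix (Fin d) (Fin d) ℂ) (f : ℝ × ℝ → Fin d → ℂ)
    (hB : B = fun p => ∑ q ∈ s, (haar2 q p : ℂ) • A q)
    (hf : f = fun p => ∑ q ∈ t, (haar2 q p : ℂ) • v q) :
    (commSh d B f =ᵐ[volume] fun p =>
        ∑' r : ((ℤ × ℤ) × (ℤ × ℤ)) × ((ℤ × ℤ) × (ℤ × ℤ)),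
          (commShS (fun x => (haar r.1.1.1 r.1.1.2 x : ℂ))
                (fun x => (haar r.2.1.1 r.2.1.2 x : ℂ)) p.1 *
              commShS (fun x => (haar r.1.2.1 r.1.2.2 x : ℂ))
                (fun x => (haar r.2.2.1 r.2.2.2 x : ℂ)) p.2) •
            (hatM d B r.1).mulVec (hatV d f r.2)) ∧
    ∀ r : ((ℤ × ℤ) × (ℤ × ℤ)) × ((ℤ × ℤ) × (ℤ × ℤ)),
      (¬ dyadicI r.1.1.1 r.1.1.2 ⊆ dyadicI r.2.1.1 r.2.1.2 ∨
          ¬ dyadicI r.1.2.1 r.1.2.2 ⊆ dyadicI r.2.2.1 r.2.2.2) →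
        ∀ p : ℝ × ℝ,
          (commShS (fun x => (haar r.1.1.1 r.1.1.2 x : ℂ))
                (fun x => (haar r.2.1.1 r.2.1.2 x : ℂ)) p.1 *
              commShS (fun x => (haar r.1.2.1 r.1.2.2 x : ℂ))
                (fun x => (haar r.2.2.1 r.2.2.2 x : ℂ)) p.2) •
            (hatM d B r.1).mulVec (hatV d f r.2) = 0 := by
  subst hB hf
  refine ⟨ae_of_all _ (commSh_haarSum s t A v), fun r hr p => ?_⟩
  rcases hr with hI | hJ
  · rw [commShS_haar_eq_zero hI, zero_mul, zero_smul]
  · rw [commShS_haar_eq_zero hJ, mul_zero, zero_smul]
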